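/- Let k be a field and n > 2 an integer; set R = k[X]/(X^n) and, for 1 ≤ i ≤ n, B_i = k[X]/(X^i) regarded as an R-module; for an element v of an R-module, ⟨v⟩ denotes the cyclic R-submodule generated by v. Consider the following pairs: (0, B_i) for 1 ≤ i ≤ n; (⟨X^{i-1}⟩, B_i) for 1 ≤ i ≤ n; (⟨X^{i-2}⟩, B_i) for 2 ≤ i ≤ n; and (⟨(X^{i-2}, X^{j-1})⟩, B_i ⊕ B_j) for 3 ≤ i ≤ n and 1 ≤ j ≤ i−2. These n(n+3)/2 pairs are indecomposable objects of S_2(k[T]/T^n), they are pairwise non-isomorphic, and every indecomposable object of S_2(k[T]/T^n) is isomorphic to one of them. In particular, S_2(k[T]/T^n) has exactly n(n+3)/2 isomorphism classes of indecomposable objects. -/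

import Mathlib

open Polynomial

noncomputable section

/-- An object of the submodule category `Sₘ(k[T]/Tⁿ)`: a pair `(A, B)` where `B` is a
finite-dimensional module over `R = k[X]/(Xⁿ)` — encoded as a finite `k[X]`-module
annihilated by `Xⁿ` — together with an `R`-submodule `A ⊆ B` with `Xᵐ • A = 0`. -/
structure SPair (k : Type) [Field k] (m n : ℕ) : Type 1 where
  B : Type
  [addCommGroup : AddCommGroup B]
  [module : Module (Polynomial k) B]
  [finite : Module.Finite (Polynomial k) B]
  bound : ∀ b : B, (X : Polynomial k) ^ n • b = 0
  A : Submodule (Polynomial k) B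
  subBound : ∀ a ∈ A, (X : Polynomial k) ^ m • a = 0

attribute [instance] SPair.addCommGroup SPair.module SPair.finite

namespace SPair

variable {k : Type} [Field k] {m n : ℕ}

/-- Isomorphism of pairs: an `R`-linear isomorphism of the ambient modules mapping the one
submodule onto the other. -/
def Iso (M N : SPair k m n) : Prop :=
  ∃ e : M.B ≃ₗ[Polynomial k] N.B, M.A.map e.toLinearMap = N.A

/-- A pair `(A, B)` is indecomposable if `B ≠ 0` and for every internal direct sum
decomposition `B = B₁ ⊕ B₂` with `A = (A ∩ B₁) ⊕ (A ∩ B₂)`, one of `B₁`, `B₂` is zero. -/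
def Indec (M : SPair k m n) : Prop :=
  (∃ b : M.B, b ≠ 0) ∧
    ∀ B₁ B₂ : Submodule (Polynomial k) M.B,
      B₁ ⊓ B₂ = ⊥ → B₁ ⊔ B₂ = ⊤ → M.A = M.A ⊓ B₁ ⊔ M.A ⊓ B₂ → B₁ = ⊥ ∨ B₂ = ⊥

end SPair

/-- The cyclic module `k[X]/(Xⁱ)`, as a module over `k[X]`. -/
abbrev Bq (k : Type) [Field k] (i : ℕ) : Type :=
  Polynomial k ⧸ (Ideal.span {(X : Polynomial k) ^ i} : Ideal (Polynomial k))

instance (k : Type) [Field k] (i : ℕ) : Module.Finite (Polynomial k) (Bq k i) :=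
  Module.Finite.of_surjective (Submodule.mkQ _) (Submodule.mkQ_surjective _)

theorem Bq_bound (k : Type) [Field k] {i n : ℕ} (h : i ≤ n) (b : Bq k i) :
    (X : Polynomial k) ^ n • b = 0 := by
  obtain ⟨p, rfl⟩ := Submodule.Quotient.mk_surjective _ b
  rw [← Submodule.Quotient.mk_smul, Submodule.Quotient.mk_eq_zero, smul_eq_mul]
  exact Ideal.mem_span_singleton.mpr ((pow_dvd_pow X h).mul_right p)

theorem Bq_smul_mk (k : Type) [Field k] {i j r : ℕ} (h : i ≤ j + r) :
    (X : Polynomial k) ^ r • (Submodule.Quotient.mk (X ^ j) : Bq k i) = 0 := by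
  rw [← Submodule.Quotient.mk_smul, Submodule.Quotient.mk_eq_zero, smul_eq_mul, ← pow_add]
  exact Ideal.mem_span_singleton.mpr (pow_dvd_pow X (by omega))

theorem span_smul_eq_zero {k : Type} [Field k] {B : Type} [AddCommGroup B]
    [Module (Polynomial k) B] (r : Polynomial k) {S : Set B} (h : ∀ v ∈ S, r • v = 0) :
    ∀ a ∈ Submodule.span (Polynomial k) S, r • a = 0 := by
  intro a ha
  induction ha using Submodule.span_induction with
  | mem v hv => exact h v hv
  | zero => simp
  | add x y _ _ hx hy => rw [smul_add, hx, hy, add_zero]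
  | smul c x _ hx => rw [smul_smul, mul_comm, ← smul_smul, hx, smul_zero]

/-- The pair `(0 ⊆ k[X]/(Xⁱ))` as an object of `Sₘ(k[T]/Tⁿ)`. -/
def pairZero (k : Type) [Field k] (m n i : ℕ) (h : i ≤ n) : SPair k m n where
  B := Bq k i
  bound := fun b => Bq_bound k h b
  A := ⊥
  subBound := fun a ha => by rw [(Submodule.mem_bot _).mp ha, smul_zero]

/-- The pair `(⟨Xʲ⟩ ⊆ k[X]/(Xⁱ))` as an object of `Sₘ(k[T]/Tⁿ)`. -/
def pairCyc (k : Type) [Field k] (m n i j : ℕ) (h : i ≤ n) (hj : i ≤ j + m) : SPair k m n where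
  B := Bq k i
  bound := fun b => Bq_bound k h b
  A := Submodule.span (Polynomial k) {(Submodule.Quotient.mk (X ^ j) : Bq k i)}
  subBound := fun a ha =>
    span_smul_eq_zero _
      (fun v hv => by rw [Set.mem_singleton_iff] at hv; rw [hv]; exact Bq_smul_mk k hj) a ha

/-- The pair `(⟨(Xᵃ, Xᵇ)⟩ ⊆ k[X]/(Xⁱ) ⊕ k[X]/(Xʲ))` as an object of `Sₘ(k[T]/Tⁿ)`. -/
def pairProd (k : Type) [Field k] (m n i j a b : ℕ) (hi : i ≤ n) (hj : j ≤ n)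
    (ha : i ≤ a + m) (hb : j ≤ b + m) : SPair k m n where
  B := Bq k i × Bq k j
  bound := fun x => Prod.ext (Bq_bound k hi x.1) (Bq_bound k hj x.2)
  A := Submodule.span (Polynomial k)
        {((Submodule.Quotient.mk (X ^ a) : Bq k i), (Submodule.Quotient.mk (X ^ b) : Bq k j))}
  subBound := fun x hx =>
    span_smul_eq_zero _
      (fun v hv => by
        rw [Set.mem_singleton_iff] at hv
        rw [hv]
        exact Prod.ext (Bq_smul_mk k ha) (Bq_smul_mk k hb)) x hx

/-! The algebra `k[X]/(Xᵈ⁺¹)` is self-injective: a `k`-linear functional on `B` that kills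
`Xᵈ⁺¹B` is the top coefficient of a `k[X]`-linear map `B → k[X]/(Xᵈ⁺¹)`. Maps from `B` to a listed
module are thus functionals, and maps from a listed module to `B` are elements. If a map from a
listed pair to `(A, B)` and one back compose to an injection, that composite is an automorphism by
the artinian property, so the listed pair is a direct summand, and all of an indecomposable
`(A, B)`. Such maps come from elements `Xᵉc` of `A` and `Xᵈ⁺¹b = Xᵉ⁺¹c` of `XA` of maximal height;
maximality says exactly that the required functionals exist.

Conversely, the submodule of a listed pair is cyclic, hence local, so it lies in one summand of any
decomposition; the other summand then has zero socle. The pairs are told apart by the annihilators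
of `A` and `B` and by the dimension of `B`. -/

section PowerTorsion

variable {R M : Type*} [CommRing R] [AddCommGroup M] [Module R M] {r : R} {n : ℕ}

theorem exists_mem_ne_zero_smul_eq_zero {U : Submodule R M} (hU : U ≠ ⊥)
    (hr : ∀ x ∈ U, r ^ n • x = 0) : ∃ x ∈ U, x ≠ 0 ∧ r • x = 0 := by
  obtain ⟨x, hxU, hx⟩ := Submodule.exists_mem_ne_zero_of_ne_bot hU
  by_contra! h
  have hpow (t : ℕ) : r ^ t • x ≠ 0 := by
    induction t with
    | zero => simpa using hx
    | succ t ih =>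
      rw [pow_succ', mul_smul]
      exact h _ (U.smul_mem _ hxU) ih
  exact hpow n (hr x hxU)

theorem injective_of_forall_smul_eq_zero {M' : Type*} [AddCommGroup M'] [Module R M']
    (hr : ∀ x : M, r ^ n • x = 0) (f : M →ₗ[R] M')
    (hf : ∀ x, r • x = 0 → f x = 0 → x = 0) : Function.Injective f := by
  refine LinearMap.ker_eq_bot.mp (by_contra fun hker => ?_)
  obtain ⟨x, hxf, hx, hrx⟩ := exists_mem_ne_zero_smul_eq_zero hker fun x _ => hr x
  exact hx (hf x hrx hxf)

theorem exists_maximal_pow_smul_mem (hr : ∀ x : M, r ^ n • x = 0) {S : Set M}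
    (hS : S.Nonempty) (h0 : (0 : M) ∉ S) :
    ∃ h < n, (∃ x, r ^ h • x ∈ S) ∧ ∀ x, r ^ (h + 1) • x ∉ S := by
  by_contra! hstep
  have hall (h : ℕ) (hn : h ≤ n) : ∃ x, r ^ h • x ∈ S := by
    induction h with
    | zero => exact hS.imp fun x hx => by simpa using hx
    | succ h ih => exact hstep h hn (ih (by omega))
  obtain ⟨x, hx⟩ := hall n le_rfl
  exact h0 (hr x ▸ hx)

end PowerTorsion

section PolynomialModule

variable {k M : Type*} [Field k] [AddCommGroup M] [Module k[X] M]

theorem exists_smul_smul_eq_self {n : ℕ} {g : M} (hg : (X : k[X]) ^ n • g = 0) {r : k[X]}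
    (hr : r.coeff 0 ≠ 0) : ∃ q : k[X], q • r • g = g := by
  have hcop : IsCoprime ((X : k[X]) ^ n) r :=
    (prime_X.coprime_iff_not_dvd.mpr (by rwa [X_dvd_iff])).pow_left
  obtain ⟨p, q, hpq⟩ := hcop
  refine ⟨q, ?_⟩
  calc q • r • g = (p * X ^ n + q * r) • g := by
        rw [add_smul, mul_smul p, hg, smul_zero, zero_add, mul_smul]
    _ = g := by rw [hpq, one_smul]

/-- A cyclic module killed by a power of `X` is local. -/
theorem mem_or_mem_of_mem_span_inf_sup {n : ℕ} {g : M} (hg : (X : k[X]) ^ n • g = 0)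
    {U V : Submodule k[X] M} (h : g ∈ Submodule.span k[X] {g} ⊓ U ⊔ Submodule.span k[X] {g} ⊓ V) :
    g ∈ U ∨ g ∈ V := by
  obtain ⟨_, ⟨hr, hU⟩, v, ⟨-, hV⟩, hsum⟩ := Submodule.mem_sup.mp h
  obtain ⟨r, rfl⟩ := Submodule.mem_span_singleton.mp hr
  by_cases hr0 : r.coeff 0 = 0
  · right
    have hv : v = (1 - r) • g := by rw [sub_smul, one_smul, ← eq_sub_of_add_eq' hsum]
    obtain ⟨q, hq⟩ := exists_smul_smul_eq_self hg (r := 1 - r) (by simp [hr0])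
    exact hq ▸ V.smul_mem q (hv ▸ hV)
  · left
    obtain ⟨q, hq⟩ := exists_smul_smul_eq_self hg hr0
    exact hq ▸ U.smul_mem q hU

theorem map_smul_of_map_X_smul {M' : Type*} [AddCommGroup M'] [Module k[X] M'] [Module k M]
    [Module k M'] [IsScalarTower k k[X] M] [IsScalarTower k k[X] M'] (f : M →ₗ[k] M')
    (hf : ∀ x, f ((X : k[X]) • x) = (X : k[X]) • f x) (p : k[X]) (x : M) :
    f (p • x) = p • f x := by
  induction p using Polynomial.induction_on' generalizing x with
  | add p q hp hq => rw [add_smul, add_smul, map_add, hp, hq]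
  | monomial t c =>
    have hpow (t : ℕ) : f ((X : k[X]) ^ t • x) = (X : k[X]) ^ t • f x := by
      induction t with
      | zero => simp
      | succ t ih => rw [pow_succ', mul_smul, hf, ih, mul_smul]
    rw [← smul_X_eq_monomial, smul_assoc, smul_assoc, map_smul, hpow]

end PolynomialModule

theorem exists_dual_pair {k U U' V W : Type*} [Field k] [AddCommGroup U] [Module k U]
    [AddCommGroup U'] [Module k U'] [AddCommGroup V] [Module k V] [AddCommGroup W] [Module k W]
    (A : Submodule k V) (T : V →ₗ[k] W) (P : U →ₗ[k] W) (Q : U' →ₗ[k] V) {w : W}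
    (hw : ∀ x y, Q y ∈ A → w ≠ P x + T (Q y)) :
    ∃ (L : Module.Dual k W) (K : Module.Dual k V),
      L w ≠ 0 ∧ L ∘ₗ P = 0 ∧ K ∘ₗ Q = 0 ∧ ∀ z ∈ A, K z = L (T z) := by
  obtain ⟨L, hLw, hL⟩ := Submodule.exists_le_ker_of_notMem
    (p := LinearMap.range P ⊔ (A ⊓ LinearMap.range Q).map T) (v := w) (by
      rw [Submodule.mem_sup]
      rintro ⟨_, ⟨x, rfl⟩, _, ⟨_, ⟨hy, ⟨y, rfl⟩⟩, rfl⟩, h⟩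
      exact hw x y hy h.symm)
  -- `L ∘ T` restricted to `A` kills `A ∩ range Q`, hence comes from a functional on `V ⧸ range Q`.
  obtain ⟨ψ, hψ⟩ : (L ∘ₗ T).domRestrict A ∈
      LinearMap.range ((LinearMap.range Q).mkQ.domRestrict A).dualMap := by
    rw [LinearMap.range_dualMap_eq_dualAnnihilator_ker, Submodule.mem_dualAnnihilator]
    rintro ⟨z, hzA⟩ hz
    have hzQ : z ∈ LinearMap.range Q := by simpa using hz
    exact hL (Submodule.mem_sup_right ⟨z, ⟨hzA, hzQ⟩, rfl⟩)
  refine ⟨L, ψ ∘ₗ (LinearMap.range Q).mkQ, hLw, ?_, ?_,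
    fun z hz => LinearMap.congr_fun hψ ⟨z, hz⟩⟩
  · ext x
    exact hL (Submodule.mem_sup_left ⟨x, rfl⟩)
  · rw [LinearMap.comp_assoc, LinearMap.range_mkQ_comp, LinearMap.comp_zero]

namespace Bq

variable {k : Type} [Field k]

theorem mk_eq_zero_iff {i : ℕ} {p : k[X]} :
    (Submodule.Quotient.mk p : Bq k i) = 0 ↔ (X : k[X]) ^ i ∣ p := by
  rw [Submodule.Quotient.mk_eq_zero, Ideal.mem_span_singleton]

variable (k) in
/-- The class `Xᵃ` in `Bᵢ = k[X]/(Xⁱ)`. -/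
abbrev Xpow (i a : ℕ) : Bq k i := Submodule.Quotient.mk (X ^ a)

theorem X_pow_smul_Xpow (i a b : ℕ) : (X : k[X]) ^ a • Xpow k i b = Xpow k i (a + b) := by
  rw [← Submodule.Quotient.mk_smul, smul_eq_mul, ← pow_add]

theorem X_smul_Xpow (i a : ℕ) : (X : k[X]) • Xpow k i a = Xpow k i (a + 1) := by
  rw [← Submodule.Quotient.mk_smul, smul_eq_mul, ← pow_succ']

theorem Xpow_eq_zero_iff {i a : ℕ} : Xpow k i a = 0 ↔ i ≤ a := by
  rw [mk_eq_zero_iff, pow_dvd_pow_iff X_ne_zero not_isUnit_X]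

theorem mem_span_Xpow {i a s : ℕ} (h : a + s ≤ i) {y : Bq k i} (hy : (X : k[X]) ^ s • y = 0) :
    y ∈ Submodule.span k[X] {Xpow k i a} := by
  obtain ⟨p, rfl⟩ := Submodule.Quotient.mk_surjective _ y
  rw [← Submodule.Quotient.mk_smul, mk_eq_zero_iff, smul_eq_mul] at hy
  have hdvd : (X : k[X]) ^ s * X ^ a ∣ X ^ s * p := by
    rw [← pow_add]
    exact (pow_dvd_pow X (by omega)).trans hy
  obtain ⟨q, rfl⟩ := (mul_dvd_mul_iff_left (pow_ne_zero s X_ne_zero)).mp hdvd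
  refine Submodule.mem_span_singleton.mpr ⟨q, ?_⟩
  rw [← Submodule.Quotient.mk_smul, smul_eq_mul, mul_comm]

theorem span_Xpow_zero (i : ℕ) : Submodule.span k[X] {Xpow k i 0} = ⊤ :=
  (Submodule.eq_top_iff').mpr fun y => mem_span_Xpow (s := i) (by omega) (Bq_bound k le_rfl y)

/-- The homomorphism `Bᵢ → M` sending `1` to an element `b` killed by `Xⁱ`. -/
def lift {M : Type*} [AddCommGroup M] [Module k[X] M] {i : ℕ} (b : M)
    (hb : (X : k[X]) ^ i • b = 0) : Bq k i →ₗ[k[X]] M :=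
  Submodule.liftQSpanSingleton _ (LinearMap.toSpanSingleton k[X] M b) hb

theorem lift_Xpow {M : Type*} [AddCommGroup M] [Module k[X] M] {i : ℕ} (b : M)
    (hb : (X : k[X]) ^ i • b = 0) (a : ℕ) : lift b hb (Xpow k i a) = (X : k[X]) ^ a • b :=
  rfl

/-- The coefficient of `Xᵈ` as a functional on `k[X]/(Xᵈ⁺¹)`. It is a Frobenius form: no
nonzero submodule lies in its kernel, and every functional on a module `M` that kills `Xᵈ⁺¹M`
factors through it. -/
def topCoeff (d : ℕ) : Bq k (d + 1) →ₗ[k] k :=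
  (Submodule.liftQ ((Ideal.span {(X : k[X]) ^ (d + 1)}).restrictScalars k) (lcoeff k d)
    fun _ hp => X_pow_dvd_iff.mp (Ideal.mem_span_singleton.mp hp) d (Nat.lt_succ_self d)) ∘ₗ
    (Submodule.Quotient.restrictScalarsEquiv k (Ideal.span {(X : k[X]) ^ (d + 1)})).symm.toLinearMap

theorem topCoeff_mk (d : ℕ) (p : k[X]) :
    topCoeff d (Submodule.Quotient.mk p : Bq k (d + 1)) = p.coeff d :=
  rfl

theorem eq_topCoeff_smul_Xpow {d : ℕ} {y : Bq k (d + 1)} (hy : (X : k[X]) • y = 0) :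
    y = topCoeff d y • Xpow k (d + 1) d := by
  obtain ⟨p, rfl⟩ := Submodule.mem_span_singleton.mp
    (mem_span_Xpow (a := d) (s := 1) le_rfl (by rwa [pow_one]))
  have htop : topCoeff d (p • Xpow k (d + 1) d) = p.coeff 0 := by
    rw [← Submodule.Quotient.mk_smul, topCoeff_mk, smul_eq_mul, coeff_mul_X_pow', if_pos le_rfl,
      Nat.sub_self]
  calc p • Xpow k (d + 1) d
      = (X * p.divX + C (p.coeff 0)) • Xpow k (d + 1) d := by rw [X_mul_divX_add]
    _ = C (p.coeff 0) • Xpow k (d + 1) d := by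
        rw [add_smul, mul_comm, mul_smul, X_smul_Xpow, Xpow_eq_zero_iff.mpr le_rfl, smul_zero,
          zero_add]
    _ = topCoeff d (p • Xpow k (d + 1) d) • Xpow k (d + 1) d := by
        rw [htop, ← algebraMap_eq, algebraMap_smul]

theorem Xpow_mem_of_ne_bot {d : ℕ} {U : Submodule k[X] (Bq k (d + 1))} (hU : U ≠ ⊥) :
    Xpow k (d + 1) d ∈ U := by
  obtain ⟨y, hyU, hy0, hy⟩ :=
    exists_mem_ne_zero_smul_eq_zero hU fun y _ => Bq_bound k le_rfl y
  have hy' := eq_topCoeff_smul_Xpow hy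
  have hc : topCoeff d y ≠ 0 := fun hc => hy0 (by rw [hy', hc, zero_smul])
  rw [← inv_smul_smul₀ hc (Xpow k (d + 1) d), ← hy']
  exact U.smul_of_tower_mem _ hyU

theorem injective_of_map_Xpow_ne_zero {M : Type*} [AddCommGroup M] [Module k[X] M] {d : ℕ}
    (f : Bq k (d + 1) →ₗ[k[X]] M) (hf : f (Xpow k (d + 1) d) ≠ 0) : Function.Injective f :=
  LinearMap.ker_eq_bot.mp (by_contra fun hker => hf (Xpow_mem_of_ne_bot hker))

theorem exists_linearMap_topCoeff_eq {M : Type*} [AddCommGroup M] [Module k[X] M] [Module k M]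
    [IsScalarTower k k[X] M] {d : ℕ} (L : M →ₗ[k] k)
    (hL : ∀ x, L ((X : k[X]) ^ (d + 1) • x) = 0) :
    ∃ ρ : M →ₗ[k[X]] Bq k (d + 1), ∀ x, topCoeff d (ρ x) = L x := by
  classical
  let poly : M →ₗ[k] k[X] := ofFn (d + 1) ∘ₗ
    LinearMap.pi fun t : Fin (d + 1) => L ∘ₗ Algebra.lsmul k k M ((X : k[X]) ^ (d - t.val))
  let ρ : M →ₗ[k] Bq k (d + 1) :=
    ((Ideal.span {(X : k[X]) ^ (d + 1)}).mkQ.restrictScalars k) ∘ₗ poly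
  have hcoeff (x : M) (t : ℕ) (ht : t < d + 1) : (poly x).coeff t = L ((X : k[X]) ^ (d - t) • x) :=
    ofFn_coeff_eq_val_of_lt (R := k) _ ht
  have hX (x : M) : ρ ((X : k[X]) • x) = (X : k[X]) • ρ x := by
    refine sub_eq_zero.mp (mk_eq_zero_iff.mpr (X_pow_dvd_iff.mpr fun t ht => ?_))
    change (poly (X • x) - X * poly x).coeff t = 0
    rw [coeff_sub, hcoeff _ t ht]
    cases t with
    | zero =>
      rw [coeff_X_mul_zero, sub_zero, smul_smul, ← pow_succ, Nat.sub_zero, hL]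
    | succ t =>
      rw [coeff_X_mul, hcoeff x t (by omega), smul_smul, ← pow_succ,
        show d - (t + 1) + 1 = d - t by omega, sub_self]
  refine ⟨{ ρ with map_smul' := map_smul_of_map_X_smul ρ hX }, fun x => ?_⟩
  exact (hcoeff x d (Nat.lt_succ_self d)).trans (by simp)

end Bq

theorem mem_of_injective_of_map_mem {R M : Type*} [Ring R] [AddCommGroup M] [Module R M]
    [IsArtinian R M] {f : M →ₗ[R] M} (hf : Function.Injective f) {U : Submodule R M}
    (hU : U ≤ U.comap f) {x : M} (hx : f x ∈ U) : x ∈ U := by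
  have hinj : Function.Injective (f.restrict hU) := fun y z h =>
    Subtype.ext (hf (congrArg Subtype.val h))
  obtain ⟨⟨y, hyU⟩, hy⟩ := (IsArtinian.bijective_of_injective_endomorphism _ hinj).2 ⟨f x, hx⟩
  exact hf (congrArg Subtype.val hy) ▸ hyU

namespace SPair

variable {k : Type} [Field k] {m n : ℕ}

/-- The `k`-vector space structure of the ambient module of a pair, by restriction of scalars
along `k → k[X]`. -/
instance (M : SPair k m n) : Module k M.B :=
  Module.compHom M.B (algebraMap k k[X])

instance (M : SPair k m n) : IsScalarTower k k[X] M.B :=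
  IsScalarTower.of_algebraMap_smul fun _ _ => rfl

instance (M : SPair k m n) : IsArtinian k[X] M.B := by
  have htors : Module.IsTorsionBySet k[X] M.B (Ideal.span {(X : k[X]) ^ n} : Ideal k[X]) :=
    (Module.isTorsionBySet_span_singleton_iff _).mpr fun {b} => M.bound b
  let := htors.module
  have : Module.Finite k (k[X] ⧸ Ideal.span {(X : k[X]) ^ n}) := (monic_X_pow n).finite_quotient
  have : IsArtinianRing (k[X] ⧸ Ideal.span {(X : k[X]) ^ n}) := IsArtinianRing.of_finite k _
  have : Module.Finite (k[X] ⧸ Ideal.span {(X : k[X]) ^ n}) M.B :=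
    Module.Finite.of_restrictScalars_finite k[X] _ _
  exact isArtinian_of_surjective_algebraMap (R := k[X] ⧸ Ideal.span {(X : k[X]) ^ n})
    Ideal.Quotient.mk_surjective

theorem Indec.eq_zero_or_eq_id {M : SPair k m n} (hM : M.Indec) {e : M.B →ₗ[k[X]] M.B}
    (he : IsIdempotentElem e) (heA : M.A ≤ M.A.comap e) : e = 0 ∨ e = LinearMap.id := by
  have hee (x : M.B) : e (e x) = e x := LinearMap.congr_fun he x
  have hcompl := LinearMap.IsIdempotentElem.isCompl he
  have hA : M.A = M.A ⊓ LinearMap.range e ⊔ M.A ⊓ LinearMap.ker e := by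
    refine le_antisymm (fun a ha => ?_) (sup_le inf_le_left inf_le_left)
    exact Submodule.mem_sup.mpr ⟨e a, ⟨heA ha, a, rfl⟩, a - e a,
      ⟨M.A.sub_mem ha (heA ha), LinearMap.mem_ker.mpr (by rw [map_sub, hee, sub_self])⟩,
      add_sub_cancel _ _⟩
  rcases hM.2 _ _ hcompl.inf_eq_bot hcompl.sup_eq_top hA with hrange | hker
  · exact Or.inl (LinearMap.range_eq_bot.mp hrange)
  · exact Or.inr (LinearMap.ext fun x => LinearMap.ker_eq_bot.mp hker (hee x))

theorem Indec.iso_of_leftInverse {M N : SPair k m n} [Nontrivial N.B] (hM : M.Indec)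
    (f : N.B →ₗ[k[X]] M.B) (g : M.B →ₗ[k[X]] N.B) (hgf : g ∘ₗ f = LinearMap.id)
    (hf : N.A ≤ M.A.comap f) (hg : M.A ≤ N.A.comap g) : M.Iso N := by
  have hgf' (y : N.B) : g (f y) = y := LinearMap.congr_fun hgf y
  have he : IsIdempotentElem (f ∘ₗ g) := LinearMap.ext fun x => congrArg f (hgf' (g x))
  rcases hM.eq_zero_or_eq_id he fun a ha => hf (hg ha) with h0 | h1
  · obtain ⟨y, hy⟩ := exists_ne (0 : N.B)
    have : g (f (g (f y))) = 0 := by rw [← LinearMap.comp_apply f g, h0]; exact map_zero g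
    exact absurd (by rwa [hgf', hgf'] at this) hy
  · refine ⟨LinearEquiv.ofLinearMap g f hgf h1,
      le_antisymm (Submodule.map_le_iff_le_comap.mpr hg) ?_⟩
    exact fun y hy => ⟨f y, hf hy, hgf' y⟩

theorem Indec.iso_of_injective_comp {M N : SPair k m n} [Nontrivial N.B] (hM : M.Indec)
    (f : N.B →ₗ[k[X]] M.B) (g : M.B →ₗ[k[X]] N.B) (hgf : Function.Injective (g ∘ₗ f))
    (hf : N.A ≤ M.A.comap f) (hg : M.A ≤ N.A.comap g) : M.Iso N := by
  let φ : N.B ≃ₗ[k[X]] N.B :=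
    LinearEquiv.ofBijective (g ∘ₗ f) (IsArtinian.bijective_of_injective_endomorphism _ hgf)
  have hφ (y : N.B) : g (f (φ.symm y)) = y := φ.apply_symm_apply y
  have hφA : N.A ≤ N.A.comap φ.symm.toLinearMap := fun y hy =>
    mem_of_injective_of_map_mem hgf (fun z hz => hg (hf hz)) (by
      change g (f (φ.symm y)) ∈ N.A
      rwa [hφ])
  exact hM.iso_of_leftInverse f (φ.symm.toLinearMap ∘ₗ g)
    (LinearMap.ext fun y => φ.symm_apply_apply y) hf fun a ha => hφA (hg ha)

theorem indec_of_span_singleton_eq_top {M : SPair k m n} {g : M.B} (hg0 : g ≠ 0)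
    (hg : Submodule.span k[X] {g} = ⊤) : M.Indec := by
  refine ⟨⟨g, hg0⟩, fun B₁ B₂ hinf hsup _ => ?_⟩
  have htop {U : Submodule k[X] M.B} (hU : g ∈ U) : U = ⊤ :=
    top_le_iff.mp (hg ▸ (Submodule.span_singleton_le_iff_mem g U).mpr hU)
  have hmem : g ∈ B₁ ∨ g ∈ B₂ := mem_or_mem_of_mem_span_inf_sup (M.bound g) (by
    rw [hg, top_inf_eq, top_inf_eq, hsup]
    trivial)
  rcases hmem with h | h
  · exact Or.inr (by rwa [htop h, top_inf_eq] at hinf)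
  · exact Or.inl (by rwa [htop h, inf_top_eq] at hinf)

end SPair

section Indecomposability

variable (k : Type) [Field k] (m n : ℕ)

theorem pairZero_eq_pairCyc (i : ℕ) (h : i ≤ n) :
    pairZero k m n i h = pairCyc k m n i i h (Nat.le_add_right i m) := by
  have hbot : Submodule.span k[X] {Bq.Xpow k i i} = ⊥ :=
    Submodule.span_singleton_eq_bot.mpr (Bq.Xpow_eq_zero_iff.mpr le_rfl)
  simp only [pairZero, pairCyc, hbot]

theorem pairCyc_indec {i : ℕ} (j : ℕ) (h : i ≤ n) (hj : i ≤ j + m) (hi : 1 ≤ i) :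
    (pairCyc k m n i j h hj).Indec :=
  SPair.indec_of_span_singleton_eq_top (M := pairCyc k m n i j h hj) (g := Bq.Xpow k i 0)
    (mt Bq.Xpow_eq_zero_iff.mp (by omega)) (Bq.span_Xpow_zero i)

variable {k}

namespace Bq

theorem exists_eq_smul_add_X_pow_smul {d e : ℕ} {x : Bq k (d + 2) × Bq k (e + 1)}
    (hx : (X : k[X]) • x = 0) :
    ∃ (r : k[X]) (u : Bq k (d + 2) × Bq k (e + 1)),
      x = r • (Xpow k (d + 2) d, Xpow k (e + 1) e) + (X : k[X]) ^ d • u := by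
  obtain ⟨y, w⟩ := x
  obtain ⟨hy, hw⟩ : (X : k[X]) • y = 0 ∧ (X : k[X]) • w = 0 := Prod.mk_eq_zero.mp hx
  obtain ⟨p, rfl⟩ := Submodule.mem_span_singleton.mp
    (mem_span_Xpow (a := d) (s := 2) le_rfl (by rw [pow_two, mul_smul, hy, smul_zero]) : y ∈ _)
  obtain ⟨r, rfl⟩ := Submodule.mem_span_singleton.mp
    (mem_span_Xpow (a := e) (s := 1) le_rfl (by rwa [pow_one]) : w ∈ _)
  refine ⟨r, ((p - r) • Xpow k (d + 2) 0, 0), ?_⟩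
  rw [Prod.smul_mk, Prod.smul_mk, smul_comm (X ^ d), X_pow_smul_Xpow, add_zero, smul_zero,
    Prod.mk_add_mk, add_zero, ← add_smul, add_sub_cancel]

theorem mem_span_of_X_smul_eq_zero_of_snd_eq_zero {d e : ℕ} {x : Bq k (d + 2) × Bq k (e + 1)}
    (hx : (X : k[X]) • x = 0) (hx2 : x.2 = 0) :
    x ∈ Submodule.span k[X] {(Xpow k (d + 2) d, Xpow k (e + 1) e)} := by
  obtain ⟨p, hp⟩ := Submodule.mem_span_singleton.mp
    (mem_span_Xpow (a := d + 1) (s := 1) le_rfl (by rw [pow_one]; exact congrArg Prod.fst hx))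
  refine Submodule.mem_span_singleton.mpr ⟨p * X, Prod.ext ?_ ?_⟩
  · rw [Prod.smul_fst, mul_smul, X_smul_Xpow, hp]
  · rw [Prod.smul_snd, mul_smul, X_smul_Xpow, Xpow_eq_zero_iff.mpr le_rfl, smul_zero, hx2]

theorem eq_bot_of_isCompl_of_Xpow_prod_mem {d e : ℕ} (he : e < d)
    {B₁ B₂ : Submodule k[X] (Bq k (d + 2) × Bq k (e + 1))} (hc : IsCompl B₁ B₂)
    (hg : (Xpow k (d + 2) d, Xpow k (e + 1) e) ∈ B₁) : B₂ = ⊥ := by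
  by_contra hB₂
  obtain ⟨x, hx₂, hx0, hx⟩ := exists_mem_ne_zero_smul_eq_zero (r := X) (n := d + 2) hB₂
    fun x _ => Prod.ext (Bq_bound k le_rfl x.1) (Bq_bound k (by omega) x.2)
  -- The projection onto `B₂` along `B₁` kills the generator of `A`, which forces `x ∈ XᵈB`.
  have hproj : ∃ u, x = (X : k[X]) ^ d • u := by
    obtain ⟨r, u, hxu⟩ := exists_eq_smul_add_X_pow_smul hx
    refine ⟨B₂.projection B₁ hc.symm u, ?_⟩
    calc x = B₂.projection B₁ hc.symm x := (Submodule.projection_apply_of_mem_left _ hx₂).symm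
      _ = X ^ d • B₂.projection B₁ hc.symm u := by
        rw [hxu, map_add, map_smul, map_smul, Submodule.projection_apply_of_mem_right hc.symm hg,
          smul_zero, zero_add]
  have hx2 : x.2 = 0 := by
    obtain ⟨u, rfl⟩ := hproj
    exact Bq_bound k he u.2
  have hx₁ : x ∈ B₁ := (Submodule.span_singleton_le_iff_mem _ _).mpr hg
    (mem_span_of_X_smul_eq_zero_of_snd_eq_zero hx hx2)
  exact hx0 (Submodule.disjoint_def.mp hc.disjoint x hx₁ hx₂)

end Bq

variable (k)

theorem pairProd_indec {d e : ℕ} (he : e < d) (hi : d + 2 ≤ n) (hj : e + 1 ≤ n)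
    (ha : d + 2 ≤ d + m) (hb : e + 1 ≤ e + m) :
    (pairProd k m n (d + 2) (e + 1) d e hi hj ha hb).Indec := by
  refine ⟨⟨(Bq.Xpow k (d + 2) 0, 0), fun h => ?_⟩, fun B₁ B₂ hinf hsup hA => ?_⟩
  · exact absurd (Bq.Xpow_eq_zero_iff.mp (congrArg Prod.fst h)) (by omega)
  · have hc : IsCompl B₁ B₂ := ⟨disjoint_iff.mpr hinf, codisjoint_iff.mpr hsup⟩
    have hg : (Bq.Xpow k (d + 2) d, Bq.Xpow k (e + 1) e) ∈
        (pairProd k m n (d + 2) (e + 1) d e hi hj ha hb).A := Submodule.mem_span_singleton_self _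
    rcases mem_or_mem_of_mem_span_inf_sup (SPair.bound _ _) (hA.le hg) with h | h
    · exact Or.inr (Bq.eq_bot_of_isCompl_of_Xpow_prod_mem he hc h)
    · exact Or.inl (Bq.eq_bot_of_isCompl_of_Xpow_prod_mem he hc.symm h)

end Indecomposability

section NonIsomorphism

variable {k : Type} [Field k] {m n : ℕ}

namespace Bq

theorem X_pow_mem_annihilator_iff {i t : ℕ} :
    (X : k[X]) ^ t ∈ Module.annihilator k[X] (Bq k i) ↔ i ≤ t := by
  rw [Ideal.annihilator_quotient, Ideal.mem_span_singleton,
    pow_dvd_pow_iff X_ne_zero not_isUnit_X]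

theorem X_pow_mem_annihilator_prod_iff {i j t : ℕ} (hj : j ≤ i) :
    (X : k[X]) ^ t ∈ Module.annihilator k[X] (Bq k i × Bq k j) ↔ i ≤ t := by
  rw [Module.annihilator_prod, Ideal.mem_inf, X_pow_mem_annihilator_iff,
    X_pow_mem_annihilator_iff]
  omega

instance (i : ℕ) : Module.Finite k (Bq k i) :=
  (monic_X_pow i).finite_quotient

theorem finrank_eq (i : ℕ) : Module.finrank k (Bq k i) = i := by
  rw [finrank_quotient_span_eq_natDegree, natDegree_X_pow]

theorem eq_of_linearEquiv {i i' : ℕ} (e : Bq k i ≃ₗ[k[X]] Bq k i') : i = i' := by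
  simpa only [finrank_eq] using (e.restrictScalars k).finrank_eq

theorem eq_of_linearEquiv_prod {i j i' j' : ℕ} (hj : j ≤ i) (hj' : j' ≤ i')
    (e : (Bq k i × Bq k j) ≃ₗ[k[X]] Bq k i' × Bq k j') : (i, j) = (i', j') := by
  have hi : i = i' := eq_of_forall_ge_iff fun t => by
    rw [← X_pow_mem_annihilator_prod_iff (k := k) hj, e.annihilator_eq,
      X_pow_mem_annihilator_prod_iff hj']
  have hdim : i + j = i' + j' := by
    simpa only [Module.finrank_prod, finrank_eq] using (e.restrictScalars k).finrank_eq
  exact Prod.ext hi (by simp only; omega)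

theorem isEmpty_linearEquiv_prod {i i' j' : ℕ} (hj0 : 1 ≤ j') (hj : j' ≤ i') :
    IsEmpty (Bq k i ≃ₗ[k[X]] Bq k i' × Bq k j') := by
  refine ⟨fun e => ?_⟩
  have hi : i = i' := eq_of_forall_ge_iff fun t => by
    rw [← X_pow_mem_annihilator_iff (k := k), e.annihilator_eq, X_pow_mem_annihilator_prod_iff hj]
  have hdim : i = i' + j' := by
    simpa only [Module.finrank_prod, finrank_eq] using (e.restrictScalars k).finrank_eq
  omega

end Bq

theorem SPair.Iso.annihilator_eq {M N : SPair k m n} (h : M.Iso N) :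
    M.A.annihilator = N.A.annihilator := by
  obtain ⟨e, he⟩ := h
  exact he ▸ (e.submoduleMap M.A).annihilator_eq

theorem X_pow_mem_annihilator_pairCyc_iff {i j t : ℕ} (h : i ≤ n) (hj : i ≤ j + m) :
    (X : k[X]) ^ t ∈ (pairCyc k m n i j h hj).A.annihilator ↔ i ≤ t + j := by
  rw [← Bq.Xpow_eq_zero_iff (k := k), ← Bq.X_pow_smul_Xpow]
  exact Submodule.mem_annihilator_span_singleton _ _

theorem pairCyc_iso_inj {i j i' j' : ℕ} {h : i ≤ n} {hj : i ≤ j + m} {h' : i' ≤ n}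
    {hj' : i' ≤ j' + m} (hji : j ≤ i) (hji' : j' ≤ i')
    (hiso : (pairCyc k m n i j h hj).Iso (pairCyc k m n i' j' h' hj')) : i = i' ∧ j = j' := by
  have hi : i = i' := Bq.eq_of_linearEquiv hiso.choose
  have hsub : i - j = i' - j' := eq_of_forall_ge_iff fun t => by
    rw [Nat.sub_le_iff_le_add, Nat.sub_le_iff_le_add,
      ← X_pow_mem_annihilator_pairCyc_iff (k := k) h hj, hiso.annihilator_eq,
      X_pow_mem_annihilator_pairCyc_iff]
  omega

theorem pairProd_iso_inj {i j a b i' j' a' b' : ℕ} {hi : i ≤ n} {hj : j ≤ n} {ha : i ≤ a + m}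
    {hb : j ≤ b + m} {hi' : i' ≤ n} {hj' : j' ≤ n} {ha' : i' ≤ a' + m} {hb' : j' ≤ b' + m}
    (hji : j ≤ i) (hji' : j' ≤ i')
    (hiso : (pairProd k m n i j a b hi hj ha hb).Iso (pairProd k m n i' j' a' b' hi' hj' ha' hb')) :
    (i, j) = (i', j') :=
  Bq.eq_of_linearEquiv_prod hji hji' hiso.choose

theorem not_pairCyc_iso_pairProd {i j i' j' a' b' : ℕ} {h : i ≤ n} {hj : i ≤ j + m}
    {hi' : i' ≤ n} {hj' : j' ≤ n} {ha' : i' ≤ a' + m} {hb' : j' ≤ b' + m}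
    (hj0 : 1 ≤ j') (hji' : j' ≤ i') :
    ¬ (pairCyc k m n i j h hj).Iso (pairProd k m n i' j' a' b' hi' hj' ha' hb') :=
  fun hiso => (Bq.isEmpty_linearEquiv_prod hj0 hji').false hiso.choose

end NonIsomorphism

section Exhaustion

variable {k : Type} [Field k] {m n : ℕ}

namespace Bq

instance (d : ℕ) : Nontrivial (Bq k (d + 1)) :=
  ⟨Xpow k (d + 1) d, 0, mt Xpow_eq_zero_iff.mp (by omega)⟩

theorem mem_span_of_topCoeff_eq {d e : ℕ} {x : Bq k (d + 2) × Bq k (e + 1)}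
    (hx1 : (X : k[X]) ^ 2 • x.1 = 0) (hx2 : (X : k[X]) • x.2 = 0)
    (h : topCoeff (d + 1) ((X : k[X]) • x.1) = topCoeff e x.2) :
    x ∈ Submodule.span k[X] {(Xpow k (d + 2) d, Xpow k (e + 1) e)} := by
  set g := (Xpow k (d + 2) d, Xpow k (e + 1) e)
  have hXx1 : (X : k[X]) • x.1 = topCoeff e x.2 • Xpow k (d + 2) (d + 1) := by
    rw [← h]
    exact eq_topCoeff_smul_Xpow (by rwa [smul_smul, ← pow_two])
  have hsnd : (x - topCoeff e x.2 • g).2 = 0 := sub_eq_zero.mpr (eq_topCoeff_smul_Xpow hx2)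
  have hX : (X : k[X]) • (x - topCoeff e x.2 • g) = 0 := by
    refine Prod.ext ?_ ?_
    · rw [Prod.smul_fst, Prod.fst_sub, smul_sub, hXx1, Prod.smul_fst, smul_comm, X_smul_Xpow]
      exact sub_self _
    · rw [Prod.smul_snd, hsnd, smul_zero]
      rfl
  rw [← sub_add_cancel x (topCoeff e x.2 • g)]
  exact Submodule.add_mem _ (mem_span_of_X_smul_eq_zero_of_snd_eq_zero hX hsnd)
    (Submodule.smul_of_tower_mem _ _ (Submodule.mem_span_singleton_self g))

end Bq

namespace SPair

theorem Indec.iso_pairCyc {M : SPair k m n} (hM : M.Indec) {d j s : ℕ} (hd : d + 1 ≤ n)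
    (hj : d + 1 ≤ j + m) {b : M.B} (hb : (X : k[X]) ^ (d + 1) • b = 0)
    (hbx : ∀ x : M.B, (X : k[X]) ^ (d + 1) • x ≠ (X : k[X]) ^ d • b)
    (hbA : (X : k[X]) ^ j • b ∈ M.A) (hA : ∀ a ∈ M.A, (X : k[X]) ^ s • a = 0)
    (hjs : j + s ≤ d + 1) : M.Iso (pairCyc k m n (d + 1) j hd hj) := by
  obtain ⟨L, hLb, hL⟩ := Submodule.exists_le_ker_of_notMem
    (p := LinearMap.range (Algebra.lsmul k k M.B ((X : k[X]) ^ (d + 1))))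
    (v := (X : k[X]) ^ d • b) (fun ⟨x, hx⟩ => hbx x hx)
  obtain ⟨ρ, hρ⟩ := Bq.exists_linearMap_topCoeff_eq L fun x => hL ⟨x, rfl⟩
  have hinj : Function.Injective (ρ ∘ₗ Bq.lift b hb) :=
    Bq.injective_of_map_Xpow_ne_zero _ fun h => hLb (by
      rw [← hρ, ← Bq.lift_Xpow b hb, ← LinearMap.comp_apply ρ, h, map_zero])
  have hρA {a : M.B} (ha : a ∈ M.A) : (X : k[X]) ^ s • ρ a = 0 := by
    rw [← map_smul, hA a ha, map_zero]
  have : Nontrivial (pairCyc k m n (d + 1) j hd hj).B := inferInstanceAs (Nontrivial (Bq k (d + 1)))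
  exact hM.iso_of_injective_comp (N := pairCyc k m n (d + 1) j hd hj) (Bq.lift b hb) ρ hinj
    ((Submodule.span_singleton_le_iff_mem _ _).mpr hbA)
    fun a ha => Bq.mem_span_Xpow hjs (hρA ha)

theorem injective_prod_comp_lift_coprod_lift {M : SPair k m n} {d e : ℕ} (hed : e < d)
    {b c : M.B} (hb : (X : k[X]) ^ (d + 2) • b = 0) (hc : (X : k[X]) ^ (e + 1) • c = 0)
    {L K : Module.Dual k M.B} (hLb : L ((X : k[X]) ^ (d + 1) • b) ≠ 0)
    (hK : ∀ x : M.B, K ((X : k[X]) ^ (e + 1) • x) = 0)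
    (hKL : K ((X : k[X]) ^ e • c) ≠ 0)
    {ρ : M.B →ₗ[k[X]] Bq k (d + 2)} (hρ : ∀ x, Bq.topCoeff (d + 1) (ρ x) = L x)
    {σ : M.B →ₗ[k[X]] Bq k (e + 1)} (hσ : ∀ x, Bq.topCoeff e (σ x) = K x) :
    Function.Injective (ρ.prod σ ∘ₗ (Bq.lift b hb).coprod (Bq.lift c hc)) := by
  refine injective_of_forall_smul_eq_zero (r := X) (n := d + 2)
    (fun x => Prod.ext (Bq_bound k le_rfl x.1) (Bq_bound k (by omega) x.2)) _ ?_
  rintro ⟨y, w⟩ hx h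
  obtain ⟨hy, hw⟩ : (X : k[X]) • y = 0 ∧ (X : k[X]) • w = 0 := Prod.mk_eq_zero.mp hx
  obtain ⟨α, rfl⟩ : ∃ α : k, y = α • Bq.Xpow k (d + 2) (d + 1) :=
    ⟨_, Bq.eq_topCoeff_smul_Xpow hy⟩
  obtain ⟨β, rfl⟩ : ∃ β : k, w = β • Bq.Xpow k (e + 1) e := ⟨_, Bq.eq_topCoeff_smul_Xpow hw⟩
  set z : M.B := α • (X : k[X]) ^ (d + 1) • b + β • (X : k[X]) ^ e • c with hz
  have hfz : (Bq.lift b hb).coprod (Bq.lift c hc)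
      (α • Bq.Xpow k (d + 2) (d + 1), β • Bq.Xpow k (e + 1) e) = z := by
    rw [LinearMap.coprod_apply, LinearMap.map_smul_of_tower, LinearMap.map_smul_of_tower,
      Bq.lift_Xpow, Bq.lift_Xpow]
  rw [LinearMap.comp_apply, hfz] at h
  obtain ⟨hρz, hσz⟩ : ρ z = 0 ∧ σ z = 0 := Prod.mk_eq_zero.mp h
  have hKb : K ((X : k[X]) ^ (d + 1) • b) = 0 := by
    rw [show d + 1 = e + 1 + (d - e) by omega, pow_add, mul_smul, hK]
  have hβ : β = 0 := by
    have hKz : K z = 0 := by rw [← hσ, hσz, map_zero]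
    rw [hz, map_add, map_smul, hKb, smul_zero, zero_add, map_smul] at hKz
    exact (smul_eq_zero.mp hKz).resolve_right hKL
  have hα : α = 0 := by
    have hLz : L z = 0 := by rw [← hρ, hρz, map_zero]
    rw [hz, hβ, zero_smul, add_zero, map_smul] at hLz
    exact (smul_eq_zero.mp hLz).resolve_right hLb
  rw [hα, hβ, zero_smul, zero_smul]
  rfl

theorem prod_mem_span_of_topCoeff_eq {M : SPair k 2 n} {d e : ℕ} {L K : Module.Dual k M.B}
    (hKL : ∀ a ∈ M.A, K a = L ((X : k[X]) • a))
    {ρ : M.B →ₗ[k[X]] Bq k (d + 2)} (hρ : ∀ x, Bq.topCoeff (d + 1) (ρ x) = L x)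
    {σ : M.B →ₗ[k[X]] Bq k (e + 1)} (hσ : ∀ x, Bq.topCoeff e (σ x) = K x)
    {a : M.B} (ha : a ∈ M.A) :
    (ρ a, σ a) ∈ Submodule.span k[X] {(Bq.Xpow k (d + 2) d, Bq.Xpow k (e + 1) e)} := by
  have hXXa : (X : k[X]) • (X : k[X]) • a = 0 := by
    rw [smul_smul, ← pow_two, M.subBound a ha]
  have hσXa : σ ((X : k[X]) • a) = 0 := by
    rw [Bq.eq_topCoeff_smul_Xpow (y := σ ((X : k[X]) • a)) (by rw [← map_smul, hXXa, map_zero]),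
      hσ, hKL _ (M.A.smul_mem X ha), hXXa, map_zero, zero_smul]
  refine Bq.mem_span_of_topCoeff_eq ?_ ?_ ?_
  · rw [← map_smul, M.subBound a ha, map_zero]
  · rw [← map_smul, hσXa]
  · rw [← map_smul, hρ, hσ, hKL a ha]

theorem Indec.iso_pairProd {M : SPair k 2 n} (hM : M.Indec) {d e : ℕ} (hed : e < d)
    (hd : d + 2 ≤ n) {b c : M.B} (hb : (X : k[X]) ^ (d + 2) • b = 0)
    (hc : (X : k[X]) ^ (e + 1) • c = 0) (hbc : (X : k[X]) ^ d • b + (X : k[X]) ^ e • c ∈ M.A)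
    (hind : ∀ x y : M.B, (X : k[X]) ^ (e + 1) • y ∈ M.A →
      (X : k[X]) ^ (d + 1) • b ≠ (X : k[X]) ^ (d + 2) • x + (X : k[X]) • (X : k[X]) ^ (e + 1) • y) :
    M.Iso (pairProd k 2 n (d + 2) (e + 1) d e hd (by omega) le_rfl (Nat.le_succ _)) := by
  obtain ⟨L, K, hLb, hLP, hKQ, hKL⟩ := exists_dual_pair (M.A.restrictScalars k)
    (Algebra.lsmul k k M.B (X : k[X])) (Algebra.lsmul k k M.B ((X : k[X]) ^ (d + 2)))
    (Algebra.lsmul k k M.B ((X : k[X]) ^ (e + 1))) hind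
  have hK (x : M.B) : K ((X : k[X]) ^ (e + 1) • x) = 0 := LinearMap.congr_fun hKQ x
  obtain ⟨ρ, hρ⟩ := Bq.exists_linearMap_topCoeff_eq L (LinearMap.congr_fun hLP)
  obtain ⟨σ, hσ⟩ := Bq.exists_linearMap_topCoeff_eq K hK
  have hKc : K ((X : k[X]) ^ e • c) = L ((X : k[X]) ^ (d + 1) • b) := by
    have hKb : K ((X : k[X]) ^ d • b) = 0 := by
      rw [show d = e + 1 + (d - (e + 1)) by omega, pow_add, mul_smul, hK]
    calc K ((X : k[X]) ^ e • c) = K ((X : k[X]) ^ d • b + (X : k[X]) ^ e • c) := by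
          rw [map_add, hKb, zero_add]
      _ = L ((X : k[X]) • ((X : k[X]) ^ d • b + (X : k[X]) ^ e • c)) := hKL _ hbc
      _ = L ((X : k[X]) ^ (d + 1) • b) := by
          rw [smul_add, smul_smul, ← pow_succ', smul_smul, ← pow_succ', hc, add_zero]
  let N : SPair k 2 n := pairProd k 2 n (d + 2) (e + 1) d e hd (by omega) le_rfl (Nat.le_succ _)
  have : Nontrivial N.B := inferInstanceAs (Nontrivial (Bq k (d + 2) × Bq k (e + 1)))
  exact hM.iso_of_injective_comp (N := N) ((Bq.lift b hb).coprod (Bq.lift c hc)) (ρ.prod σ)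
    (injective_prod_comp_lift_coprod_lift hed hb hc hLb hK (hKc ▸ hLb) hρ hσ)
    ((Submodule.span_singleton_le_iff_mem _ _).mpr hbc)
    fun a ha => prod_mem_span_of_topCoeff_eq hKL hρ hσ ha

theorem Indec.exists_iso_pairZero {M : SPair k m n} (hM : M.Indec) (hA : M.A = ⊥) :
    ∃ d, ∃ hd : d + 1 ≤ n, M.Iso (pairZero k m n (d + 1) hd) := by
  obtain ⟨h, hn, ⟨b, hb⟩, hmax⟩ :=
    exists_maximal_pow_smul_mem M.bound (S := {v | v ≠ 0}) hM.1 (fun h0 => h0 rfl)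
  have hzero (x : M.B) : (X : k[X]) ^ (h + 1) • x = 0 := not_not.mp (hmax x)
  refine ⟨h, hn, ?_⟩
  rw [pairZero_eq_pairCyc]
  refine hM.iso_pairCyc (s := 0) hn _ (hzero b) (fun x hx => hb ?_) ?_ (fun a ha => ?_) le_rfl
  · rw [← hx, hzero]
  · rw [hzero]
    exact M.A.zero_mem
  · rw [hA, Submodule.mem_bot] at ha
    rw [ha, smul_zero]

theorem Indec.exists_iso_pairCyc_add_one {M : SPair k m n} (hM : M.Indec) (hm : 1 ≤ m)
    (hA : M.A ≠ ⊥) (hX : ∀ a ∈ M.A, (X : k[X]) • a = 0) :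
    ∃ d, ∃ hd : d + 1 ≤ n, M.Iso (pairCyc k m n (d + 1) d hd (Nat.add_le_add_left hm d)) := by
  obtain ⟨h, hn, ⟨b, hbA, hb⟩, hmax⟩ :=
    exists_maximal_pow_smul_mem M.bound (S := {v | v ∈ M.A ∧ v ≠ 0})
      (Submodule.exists_mem_ne_zero_of_ne_bot hA) (fun h0 => h0.2 rfl)
  refine ⟨h, hn, hM.iso_pairCyc (s := 1) hn _ (b := b) ?_
    (fun x hx => hmax x ?_) hbA (fun a ha => by rw [pow_one, hX a ha]) le_rfl⟩
  · rw [pow_succ', mul_smul, hX _ hbA]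
  · rw [hx]
    exact ⟨hbA, hb⟩

/-- `d + 1` is the largest height of a nonzero element of `XA`, and `e` the largest height of an
element of `A` whose product with `X` is nonzero of height at least `d + 1`. -/
theorem exists_maximal_heights {M : SPair k 2 n} (hX : ∃ a ∈ M.A, (X : k[X]) • a ≠ 0) :
    ∃ (d e : ℕ) (b c : M.B), d + 2 ≤ n ∧ e ≤ d ∧ (X : k[X]) ^ e • c ∈ M.A ∧
      (X : k[X]) ^ (d + 1) • b = (X : k[X]) • (X : k[X]) ^ e • c ∧
      (X : k[X]) • (X : k[X]) ^ e • c ≠ 0 ∧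
      (∀ x, ∀ a ∈ M.A, (X : k[X]) • a ≠ 0 → (X : k[X]) ^ (d + 2) • x ≠ (X : k[X]) • a) ∧
      ∀ x y, (X : k[X]) ^ (e + 1) • y ∈ M.A → (X : k[X]) • (X : k[X]) ^ (e + 1) • y ≠ 0 →
        (X : k[X]) ^ (d + 1) • x ≠ (X : k[X]) • (X : k[X]) ^ (e + 1) • y := by
  obtain ⟨h, hn, ⟨b₀, a₀, ha₀, hXa₀, hb₀⟩, hmax⟩ := exists_maximal_pow_smul_mem M.bound
    (S := {v | ∃ a ∈ M.A, (X : k[X]) • a ≠ 0 ∧ v = (X : k[X]) • a})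
    (hX.imp' (fun a => (X : k[X]) • a) fun a ha => ⟨a, ha.1, ha.2, rfl⟩)
    (fun ⟨_, _, hne, h0⟩ => hne h0.symm)
  obtain ⟨d, rfl⟩ : ∃ d, h = d + 1 := Nat.exists_eq_succ_of_ne_zero fun h0 =>
    hmax a₀ ⟨a₀, ha₀, hXa₀, by rw [h0, zero_add, pow_one]⟩
  obtain ⟨e, -, ⟨c, hcA, hXc, b, hbc⟩, hmax'⟩ := exists_maximal_pow_smul_mem M.bound
    (S := {a | a ∈ M.A ∧ (X : k[X]) • a ≠ 0 ∧ ∃ b, (X : k[X]) ^ (d + 1) • b = (X : k[X]) • a})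
    ⟨a₀, ha₀, hXa₀, b₀, hb₀⟩ (fun h0 => h0.2.1 (smul_zero _))
  refine ⟨d, e, b, c, hn, ?_, hcA, hbc, hXc, fun x a ha hXa hx => hmax x ⟨a, ha, hXa, hx⟩,
    fun x y hyA hXy hx => hmax' y ⟨hyA, hXy, x, hx⟩⟩
  by_contra! hde
  refine hmax ((X : k[X]) ^ (e - (d + 1)) • c) ⟨_, hcA, hXc, ?_⟩
  rw [smul_smul, smul_smul, ← pow_add, ← pow_succ']
  congr 2
  omega

theorem Indec.exists_iso_pairCyc_add_two_or_pairProd {M : SPair k 2 n} (hM : M.Indec)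
    (hX : ∃ a ∈ M.A, (X : k[X]) • a ≠ 0) :
    (∃ d, ∃ hd : d + 2 ≤ n, M.Iso (pairCyc k 2 n (d + 2) d hd le_rfl)) ∨
    (∃ d e, ∃ (_ : e < d) (hd : d + 2 ≤ n),
      M.Iso (pairProd k 2 n (d + 2) (e + 1) d e hd (by omega) le_rfl (Nat.le_succ _))) := by
  obtain ⟨d, e, b, c, hn, hed, hcA, hbc, hne, hmaxd, hmaxe⟩ := exists_maximal_heights hX
  have hXXc : (X : k[X]) • (X : k[X]) • (X : k[X]) ^ e • c = 0 := by
    rw [smul_smul, ← pow_two, M.subBound _ hcA]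
  rcases hed.eq_or_lt with rfl | hed
  · refine Or.inl ⟨e, hn,
      hM.iso_pairCyc (d := e + 1) (s := 2) hn le_rfl (b := c) ?_ (fun x => ?_) hcA M.subBound
        le_rfl⟩
    · rw [pow_succ', pow_succ', mul_smul, mul_smul, hXXc]
    · rw [pow_succ' X e, mul_smul]
      exact hmaxd x _ hcA hne
  · have hb : (X : k[X]) ^ (d + 2) • b = 0 := by rw [pow_succ', mul_smul, hbc, hXXc]
    have hdiff : (X : k[X]) ^ e • (c - (X : k[X]) ^ (d - e) • b) =
        (X : k[X]) ^ e • c - (X : k[X]) ^ d • b := by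
      rw [smul_sub, smul_smul, ← pow_add, Nat.add_sub_cancel' hed.le]
    refine Or.inr ⟨d, e, hed, hn,
      hM.iso_pairProd hed hn (c := c - (X : k[X]) ^ (d - e) • b) hb ?_ ?_ fun x y hyA heq => ?_⟩
    · rw [pow_succ', mul_smul, hdiff, smul_sub, ← hbc, smul_smul, ← pow_succ', sub_self]
    · rwa [hdiff, add_sub_cancel]
    · rw [hbc] at heq
      by_cases hy : (X : k[X]) • (X : k[X]) ^ (e + 1) • y = 0
      · exact hmaxd x _ hcA hne (by rw [heq, hy, add_zero])
      · refine hmaxe (b - (X : k[X]) • x) y hyA hy ?_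
        rw [smul_sub, hbc, heq, ← mul_smul (X ^ (d + 1)) X x, ← pow_succ, add_sub_cancel_left]

theorem Indec.exists_iso {M : SPair k 2 n} (hM : M.Indec) :
    (∃ d, ∃ hd : d + 1 ≤ n, M.Iso (pairZero k 2 n (d + 1) hd)) ∨
    (∃ d, ∃ hd : d + 1 ≤ n, M.Iso (pairCyc k 2 n (d + 1) d hd (Nat.le_succ _))) ∨
    (∃ d, ∃ hd : d + 2 ≤ n, M.Iso (pairCyc k 2 n (d + 2) d hd le_rfl)) ∨
    (∃ d e, ∃ (_ : e < d) (hd : d + 2 ≤ n),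
      M.Iso (pairProd k 2 n (d + 2) (e + 1) d e hd (by omega) le_rfl (Nat.le_succ _))) := by
  by_cases hA : M.A = ⊥
  · exact Or.inl (hM.exists_iso_pairZero hA)
  by_cases hX : ∀ a ∈ M.A, (X : k[X]) • a = 0
  · exact Or.inr (Or.inl (hM.exists_iso_pairCyc_add_one one_le_two hA hX))
  · push Not at hX
    exact Or.inr (Or.inr (hM.exists_iso_pairCyc_add_two_or_pairProd hX))

end SPair

end Exhaustion

/-- **Proposition 9 (classification for `m = 2`).** For `n > 2`, the `n(n+3)/2` pairs
`(0 ⊆ Bᵢ)` (`1 ≤ i ≤ n`), `(⟨Xⁱ⁻¹⟩ ⊆ Bᵢ)` (`1 ≤ i ≤ n`), `(⟨Xⁱ⁻²⟩ ⊆ Bᵢ)` (`2 ≤ i ≤ n`) and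
`(⟨(Xⁱ⁻², Xʲ⁻¹)⟩ ⊆ Bᵢ ⊕ Bⱼ)` (`3 ≤ i ≤ n`, `1 ≤ j ≤ i - 2`), where `Bᵢ = k[X]/(Xⁱ)`, are
indecomposable objects of `S₂(k[T]/Tⁿ)`, pairwise non-isomorphic, and every indecomposable
object of `S₂(k[T]/Tⁿ)` is isomorphic to one of them.  In particular `S₂(k[T]/Tⁿ)` has
exactly `n(n+3)/2` isomorphism classes of indecomposable objects. -/
theorem classification_S2 (k : Type) [Field k] (n : ℕ) (hn : 2 < n) :
    -- the listed pairs are indecomposable objects of S₂(k[T]/Tⁿ)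
    (∀ i (h1 : 1 ≤ i) (hi : i ≤ n), (pairZero k 2 n i hi).Indec) ∧
    (∀ i (h1 : 1 ≤ i) (hi : i ≤ n), (pairCyc k 2 n i (i - 1) hi (by omega)).Indec) ∧
    (∀ i (h2 : 2 ≤ i) (hi : i ≤ n), (pairCyc k 2 n i (i - 2) hi (by omega)).Indec) ∧
    (∀ i j (h3 : 3 ≤ i) (hi : i ≤ n) (hj1 : 1 ≤ j) (hj2 : j ≤ i - 2),
      (pairProd k 2 n i j (i - 2) (j - 1) hi (by omega) (by omega) (by omega)).Indec) ∧
    -- they are pairwise non-isomorphic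
    (∀ i i' (h1 : 1 ≤ i) (hi : i ≤ n) (h1' : 1 ≤ i') (hi' : i' ≤ n), i ≠ i' →
      ¬ (pairZero k 2 n i hi).Iso (pairZero k 2 n i' hi')) ∧
    (∀ i i' (h1 : 1 ≤ i) (hi : i ≤ n) (h1' : 1 ≤ i') (hi' : i' ≤ n), i ≠ i' →
      ¬ (pairCyc k 2 n i (i - 1) hi (by omega)).Iso (pairCyc k 2 n i' (i' - 1) hi' (by omega))) ∧
    (∀ i i' (h2 : 2 ≤ i) (hi : i ≤ n) (h2' : 2 ≤ i') (hi' : i' ≤ n), i ≠ i' →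
      ¬ (pairCyc k 2 n i (i - 2) hi (by omega)).Iso (pairCyc k 2 n i' (i' - 2) hi' (by omega))) ∧
    (∀ i j i' j' (h3 : 3 ≤ i) (hi : i ≤ n) (hj1 : 1 ≤ j) (hj2 : j ≤ i - 2)
        (h3' : 3 ≤ i') (hi' : i' ≤ n) (hj1' : 1 ≤ j') (hj2' : j' ≤ i' - 2),
      (i, j) ≠ (i', j') →
      ¬ (pairProd k 2 n i j (i - 2) (j - 1) hi (by omega) (by omega) (by omega)).Iso
          (pairProd k 2 n i' j' (i' - 2) (j' - 1) hi' (by omega) (by omega) (by omega))) ∧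
    (∀ i i' (h1 : 1 ≤ i) (hi : i ≤ n) (h1' : 1 ≤ i') (hi' : i' ≤ n),
      ¬ (pairZero k 2 n i hi).Iso (pairCyc k 2 n i' (i' - 1) hi' (by omega))) ∧
    (∀ i i' (h1 : 1 ≤ i) (hi : i ≤ n) (h2' : 2 ≤ i') (hi' : i' ≤ n),
      ¬ (pairZero k 2 n i hi).Iso (pairCyc k 2 n i' (i' - 2) hi' (by omega))) ∧
    (∀ i i' j' (h1 : 1 ≤ i) (hi : i ≤ n)
        (h3' : 3 ≤ i') (hi' : i' ≤ n) (hj1' : 1 ≤ j') (hj2' : j' ≤ i' - 2),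
      ¬ (pairZero k 2 n i hi).Iso
          (pairProd k 2 n i' j' (i' - 2) (j' - 1) hi' (by omega) (by omega) (by omega))) ∧
    (∀ i i' (h1 : 1 ≤ i) (hi : i ≤ n) (h2' : 2 ≤ i') (hi' : i' ≤ n),
      ¬ (pairCyc k 2 n i (i - 1) hi (by omega)).Iso
          (pairCyc k 2 n i' (i' - 2) hi' (by omega))) ∧
    (∀ i i' j' (h1 : 1 ≤ i) (hi : i ≤ n)
        (h3' : 3 ≤ i') (hi' : i' ≤ n) (hj1' : 1 ≤ j') (hj2' : j' ≤ i' - 2),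
      ¬ (pairCyc k 2 n i (i - 1) hi (by omega)).Iso
          (pairProd k 2 n i' j' (i' - 2) (j' - 1) hi' (by omega) (by omega) (by omega))) ∧
    (∀ i i' j' (h2 : 2 ≤ i) (hi : i ≤ n)
        (h3' : 3 ≤ i') (hi' : i' ≤ n) (hj1' : 1 ≤ j') (hj2' : j' ≤ i' - 2),
      ¬ (pairCyc k 2 n i (i - 2) hi (by omega)).Iso
          (pairProd k 2 n i' j' (i' - 2) (j' - 1) hi' (by omega) (by omega) (by omega))) ∧
    -- every indecomposable object of S₂(k[T]/Tⁿ) is isomorphic to one of them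
    (∀ M : SPair k 2 n, M.Indec →
      (∃ i, ∃ (_ : 1 ≤ i) (hi : i ≤ n), M.Iso (pairZero k 2 n i hi)) ∨
      (∃ i, ∃ (_ : 1 ≤ i) (hi : i ≤ n), M.Iso (pairCyc k 2 n i (i - 1) hi (by omega))) ∨
      (∃ i, ∃ (_ : 2 ≤ i) (hi : i ≤ n), M.Iso (pairCyc k 2 n i (i - 2) hi (by omega))) ∨
      (∃ i j, ∃ (_ : 3 ≤ i) (hi : i ≤ n) (_ : 1 ≤ j) (hj2 : j ≤ i - 2),
        M.Iso (pairProd k 2 n i j (i - 2) (j - 1) hi (by omega) (by omega) (by omega)))) := by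
  simp only [pairZero_eq_pairCyc]
  refine ⟨fun i h1 hi => pairCyc_indec k 2 n i hi _ h1,
    fun i h1 hi => pairCyc_indec k 2 n (i - 1) hi _ h1,
    fun i h2 hi => pairCyc_indec k 2 n (i - 2) hi _ (by omega),
    fun i j h3 hi hj1 hj2 => ?_,
    fun i i' _ _ _ _ hne h => hne (pairCyc_iso_inj (by omega) (by omega) h).1,
    fun i i' _ _ _ _ hne h => hne (pairCyc_iso_inj (by omega) (by omega) h).1,
    fun i i' _ _ _ _ hne h => hne (pairCyc_iso_inj (by omega) (by omega) h).1,
    fun i j i' j' _ _ _ _ _ _ _ _ hne h => hne (pairProd_iso_inj (by omega) (by omega) h),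
    fun i i' _ _ _ _ h => by have := pairCyc_iso_inj (by omega) (by omega) h; omega,
    fun i i' _ _ _ _ h => by have := pairCyc_iso_inj (by omega) (by omega) h; omega,
    fun i i' j' _ _ _ _ _ _ => not_pairCyc_iso_pairProd (by omega) (by omega),
    fun i i' _ _ _ _ h => by have := pairCyc_iso_inj (by omega) (by omega) h; omega,
    fun i i' j' _ _ _ _ _ _ => not_pairCyc_iso_pairProd (by omega) (by omega),
    fun i i' j' _ _ _ _ _ _ => not_pairCyc_iso_pairProd (by omega) (by omega),
    fun M hM => ?_⟩
  · obtain ⟨d, rfl⟩ := Nat.exists_eq_add_of_le' (show 2 ≤ i by omega)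
    obtain ⟨e, rfl⟩ := Nat.exists_eq_add_of_le' hj1
    exact pairProd_indec k 2 n hj2 hi _ _ _
  · rcases hM.exists_iso with ⟨d, hd, h⟩ | ⟨d, hd, h⟩ | ⟨d, hd, h⟩ | ⟨d, e, hed, hd, h⟩
    · exact Or.inl ⟨d + 1, by omega, hd, pairZero_eq_pairCyc k 2 n _ hd ▸ h⟩
    · exact Or.inr (Or.inl ⟨d + 1, by omega, hd, h⟩)
    · exact Or.inr (Or.inr (Or.inl ⟨d + 2, by omega, hd, h⟩))
    · exact Or.inr (Or.inr (Or.inr ⟨d + 2, e + 1, by omega, hd, by omega, hed, h⟩))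

end
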